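/- arXiv:1305.0134 — 2 statements merged into one kernel-verified Lean document; each statement's English description precedes it below -/
import Mathlib

section
/- Let P and Q be finite partially ordered sets and f : P → Q an order-preserving map. If for every q ∈ Q the geometric realization of the subposet f⁻¹(Q_{≥q}) = {p ∈ P : q ≤ f(p)} (with the order induced from P) is contractible, then |P| and |Q| are homotopy equivalent. -/
open Classical

/-- The geometric realization of (the order complex of) a finite poset `P`:
points are convex combinations of elements of `P` whose support is a chain,
topologized as a subspace of `P → ℝ`. -/
abbrev GeomReal (P : Type*) [Fintype P] [PartialOrder P] : Type _ :=
  { f : P → ℝ // (∀ p, 0 ≤ f p) ∧ (∑ p, f p = 1) ∧ IsChain (· ≤ ·) {p | f p ≠ 0} }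

namespace QFL

open unitInterval

/-- Realization of the clique complex of `r` on the vertex set `S`. -/
def K {M : Type} [Fintype M] (r : M → M → Prop) (S : Set M) : Set (M → ℝ) :=
  {f | (∀ p, 0 ≤ f p) ∧ (∑ p, f p = 1) ∧ (∀ p q, f p ≠ 0 → f q ≠ 0 → r p q) ∧
    ∀ p, f p ≠ 0 → p ∈ S}

section
variable {M : Type} [Fintype M] {r : M → M → Prop}

lemma K_mono {S T : Set M} (h : S ⊆ T) : K r S ⊆ K r T :=
  fun _ hf => ⟨hf.1, hf.2.1, hf.2.2.1, fun p hp => h (hf.2.2.2 p hp)⟩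

lemma K_subset_simplex (S : Set M) : K r S ⊆ stdSimplex ℝ M :=
  fun _ hf => ⟨hf.1, hf.2.1⟩

lemma isClosed_K (S : Set M) : IsClosed (K r S) := by
  have hz : ∀ p : M, IsClosed {f : M → ℝ | f p = 0} := fun p =>
    isClosed_eq (continuous_apply p) continuous_const
  have h1 : K r S = {f | ∀ p, 0 ≤ f p} ∩ ({f | ∑ p, f p = 1} ∩
      ((⋂ p, ⋂ q, ({f | f p = 0} ∪ ({f | f q = 0} ∪ {_f | r p q}))) ∩
        ⋂ p, ({f | f p = 0} ∪ {_f | p ∈ S}))) := by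
    ext f
    simp only [K, Set.mem_setOf_eq, Set.mem_inter_iff, Set.mem_iInter, Set.mem_union]
    refine and_congr_right fun _ => and_congr_right fun _ => and_congr ?_ ?_
    · refine forall_congr' fun p => forall_congr' fun q => ?_
      tauto
    · refine forall_congr' fun p => ?_
      tauto
  rw [h1]
  refine IsClosed.inter ?_ (IsClosed.inter ?_ (IsClosed.inter ?_ ?_))
  · simp only [Set.setOf_forall]
    exact isClosed_iInter fun p => isClosed_le continuous_const (continuous_apply p)
  · exact isClosed_eq (by fun_prop) continuous_const
  · exact isClosed_iInter fun p => isClosed_iInter fun q =>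
      (hz p).union ((hz q).union isClosed_const)
  · exact isClosed_iInter fun p => (hz p).union isClosed_const

instance (S : Set M) : CompactSpace (K r S) :=
  isCompact_iff_compactSpace.1
    ((isCompact_stdSimplex ℝ M).of_isClosed_subset (isClosed_K S) (K_subset_simplex S))

/-- segment from `x` to the vertex `m` -/
noncomputable def seg (m : M) (t : ℝ) (x : M → ℝ) : M → ℝ :=
  fun p => (1 - t) * x p + t * (Pi.single m (1 : ℝ) : M → ℝ) p

lemma seg_mem {S T : Set M} {m : M} (hsymm : ∀ p q, r p q → r q p) (hrefl : ∀ p, r p p)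
    (hS : ∀ p ∈ S, r p m ∧ p ∈ T) (hm : m ∈ T) {x : M → ℝ} (hx : x ∈ K r S)
    {t : ℝ} (h0 : 0 ≤ t) (h1 : t ≤ 1) : seg m t x ∈ K r T := by
  have key : ∀ p, seg m t x p ≠ 0 → p = m ∨ x p ≠ 0 := by
    intro p hp
    by_contra hcon
    push Not at hcon
    exact hp (by simp [seg, hcon.2, hcon.1])
  refine ⟨fun p => ?_, ?_, ?_, ?_⟩
  · have := hx.1 p
    have h2 : 0 ≤ (Pi.single m (1 : ℝ) : M → ℝ) p := by
      by_cases h : p = m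
      · subst h; simp
      · simp [h]
    have : 0 ≤ 1 - t := by linarith
    unfold seg
    positivity
  · simp only [seg, Finset.sum_add_distrib, ← Finset.mul_sum, hx.2.1]
    simp
  · intro p q hp hq
    rcases key p hp with hpm | hp <;> rcases key q hq with hqm | hq
    · rw [hpm, hqm]; exact hrefl _
    · rw [hpm]; exact hsymm _ _ (hS q (hx.2.2.2 q hq)).1
    · rw [hqm]; exact (hS p (hx.2.2.2 p hp)).1
    · exact hx.2.2.1 p q hp hq
  · intro p hp
    rcases key p hp with hpm | hp'
    · rw [hpm]; exact hm
    · exact (hS p (hx.2.2.2 p hp')).2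

lemma vertex_mem {S : Set M} {m : M} (hrefl : ∀ p, r p p) (hm : m ∈ S) :
    (Pi.single m (1 : ℝ) : M → ℝ) ∈ K r S := by
  have key : ∀ p, (Pi.single m (1 : ℝ) : M → ℝ) p ≠ 0 → p = m := by
    intro p hp
    by_contra h
    exact hp (by simp [h])
  refine ⟨fun p => ?_, by simp, ?_, ?_⟩
  · by_cases h : p = m
    · subst h; simp
    · simp [h]
  · intro p q hp hq
    rw [key p hp, key q hq]; exact hrefl _
  · intro p hp
    rw [key p hp]; exact hm

lemma continuous_seg (m : M) : Continuous fun z : ℝ × (M → ℝ) => seg m z.1 z.2 := by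
  unfold seg
  fun_prop

lemma contractible_of_cone {S : Set M} {m : M} (hsymm : ∀ p q, r p q → r q p)
    (hrefl : ∀ p, r p p) (hm : m ∈ S) (hS : ∀ p ∈ S, r p m) : ContractibleSpace (K r S) := by
  rw [contractible_iff_id_nullhomotopic]
  refine ⟨⟨_, vertex_mem hrefl hm⟩, ⟨?_⟩⟩
  refine { toFun := fun z => ⟨seg m z.1 z.2.1, seg_mem hsymm hrefl
            (fun p hp => ⟨hS p hp, hp⟩) hm z.2.2 z.1.2.1 z.1.2.2⟩
           continuous_toFun := ?_
           map_zero_left := ?_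
           map_one_left := ?_ }
  · refine Continuous.subtype_mk ?_ _
    exact (continuous_seg m).comp (by fun_prop : Continuous fun z : I × K r S =>
      ((z.1 : ℝ), (z.2 : M → ℝ)))
  · intro x; ext p; simp [seg]
  · intro x; ext p; simp [seg]

/-- A strong deformation retract gives a homotopy equivalence. -/
lemma equiv_of_retract {S T : Set M} (hST : K r S ⊆ K r T) (G : C(K r T × I, K r T))
    (h0 : ∀ y, G (y, 0) = y) (h1 : ∀ y, (G (y, 1) : M → ℝ) ∈ K r S)
    (hfix : ∀ y : K r T, (y : M → ℝ) ∈ K r S → ∀ s, G (y, s) = y) :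
    Nonempty (ContinuousMap.HomotopyEquiv (K r S) (K r T)) := by
  let i : C(K r S, K r T) := ⟨Set.inclusion hST, continuous_inclusion hST⟩
  let ρ : C(K r T, K r S) := ⟨fun y => ⟨G (y, 1), h1 y⟩, by fun_prop⟩
  refine ⟨⟨i, ρ, ?_, ?_⟩⟩
  · have : ρ.comp i = ContinuousMap.id _ := by
      ext x : 1
      apply Subtype.ext
      have h := congrArg (fun z : K r T => (z : M → ℝ)) (hfix (i x) x.2 1)
      exact h
    rw [this]
  · refine ContinuousMap.Homotopic.symm ⟨?_⟩
    exact { toFun := fun z => G (z.2, z.1)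
            continuous_toFun := by fun_prop
            map_zero_left := h0
            map_one_left := fun y => by apply Subtype.ext; rfl }

lemma add_point {S : Set M} {m : M} (hsymm : ∀ p q, r p q → r q p)
    (hrefl : ∀ p, r p p) (hm : m ∉ S)
    (hL : ContractibleSpace (K r {x | x ∈ S ∧ r x m})) :
    Nonempty (ContinuousMap.HomotopyEquiv (K r S) (K r (insert m S))) := by
  set L : Set M := {x | x ∈ S ∧ r x m} with hLdef
  obtain ⟨c, ⟨H⟩⟩ := (contractible_iff_id_nullhomotopic _).1 hL
  have hST : K r S ⊆ K r (insert m S) := K_mono (Set.subset_insert m S)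
  have hLS : K r L ⊆ K r S := K_mono fun x hx => hx.1
  have hsegm : ∀ (x : K r L) (t : I), seg m t x.1 ∈ K r (insert m S) := fun x t =>
    seg_mem hsymm hrefl (fun p hp => ⟨hp.2, Set.mem_insert_of_mem _ hp.1⟩)
      (Set.mem_insert _ _) x.2 t.2.1 t.2.2
  have hz : ∀ x ∈ K r S, x m = 0 := by
    intro x hx
    by_contra h
    exact hm (hx.2.2.2 m h)
  have hsm : ∀ x ∈ K r S, ∀ t, seg m t x m = t := by
    intro x hx t
    simp [seg, hz x hx]
  -- the covering map
  let π₀ : (K r S × I) ⊕ (K r L × I × I) → K r (insert m S) × I :=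
    Sum.elim (fun z => (⟨z.1.1, hST z.1.2⟩, z.2)) (fun z => (⟨_, hsegm z.1 z.2.1⟩, z.2.2))
  have hπc₀ : Continuous π₀ := by
    refine Continuous.sumElim ?_ ?_
    · fun_prop
    · refine Continuous.prodMk (Continuous.subtype_mk ?_ _) (by fun_prop)
      exact (continuous_seg m).comp (by fun_prop : Continuous fun z : K r L × I × I =>
        ((z.2.1 : ℝ), (z.1 : M → ℝ)))
  let π : C((K r S × I) ⊕ (K r L × I × I), K r (insert m S) × I) := ⟨π₀, hπc₀⟩
  have hπc : Continuous π := π.continuous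
  have hπs : Function.Surjective π := by
    rintro ⟨⟨y, hy⟩, s⟩
    by_cases h0 : y m = 0
    · refine ⟨Sum.inl (⟨y, hy.1, hy.2.1, hy.2.2.1, fun p hp => ?_⟩, s), rfl⟩
      rcases hy.2.2.2 p hp with rfl | h
      · exact absurd h0 hp
      · exact h
    · have hle : y m ≤ 1 := by
        rw [← hy.2.1]
        exact Finset.single_le_sum (fun p _ => hy.1 p) (Finset.mem_univ m)
      by_cases h1 : y m = 1
      · refine ⟨Sum.inr (c, 1, s), ?_⟩
        refine Prod.ext (Subtype.ext ?_) rfl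
        funext p
        change seg m ((1 : I) : ℝ) c.1 p = y p
        by_cases hp : p = m
        · subst hp; simp [seg, h1]
        · have h2 := hy.2.1
          rw [← Finset.add_sum_erase _ _ (Finset.mem_univ m), h1] at h2
          have h3 : ∑ q ∈ Finset.univ.erase m, y q = 0 := by linarith
          rw [Finset.sum_eq_zero_iff_of_nonneg (fun q _ => hy.1 q)] at h3
          have := h3 p (by simp [hp])
          simp [seg, hp, this]
      · have hlt : 0 < 1 - y m := by
          have := lt_of_le_of_ne hle h1
          linarith
        let x : M → ℝ := fun p => if p = m then 0 else y p / (1 - y m)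
        have hxs : ∀ p, x p ≠ 0 → p ≠ m ∧ y p ≠ 0 := by
          intro p hp
          by_cases h : p = m
          · exact absurd (by simp [x, h]) hp
          · refine ⟨h, fun h' => hp (by simp [x, h'])⟩
        have hx : x ∈ K r L := by
          refine ⟨fun p => ?_, ?_, ?_, ?_⟩
          · by_cases h : p = m
            · simp [x, h]
            · have := hy.1 p
              simp only [x, h, if_false]
              positivity
          · have h2 := hy.2.1
            rw [← Finset.add_sum_erase _ _ (Finset.mem_univ m)] at h2 ⊢
            have h3 : ∑ q ∈ Finset.univ.erase m, x q
                = (∑ q ∈ Finset.univ.erase m, y q) / (1 - y m) := by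
              rw [Finset.sum_div]
              refine Finset.sum_congr rfl fun q hq => ?_
              simp [x, Finset.ne_of_mem_erase hq]
            rw [h3]
            have h4 : ∑ q ∈ Finset.univ.erase m, y q = 1 - y m := by linarith
            rw [h4, div_self hlt.ne']
            simp [x]
          · intro p q hp hq
            exact hy.2.2.1 p q (hxs p hp).2 (hxs q hq).2
          · intro p hp
            have h := hxs p hp
            exact ⟨(hy.2.2.2 p h.2).resolve_left h.1, hy.2.2.1 p m h.2 h0⟩
        refine ⟨Sum.inr (⟨x, hx⟩, ⟨y m, hy.1 m, hle⟩, s), ?_⟩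
        refine Prod.ext (Subtype.ext ?_) rfl
        funext p
        change seg m (y m) x p = y p
        by_cases hp : p = m
        · subst hp; simp [seg, x]
        · simp only [seg, x, hp, if_false]
          simp [hp]
          field_simp
  have hπq : Topology.IsQuotientMap π :=
    hπc.isClosedMap.isQuotientMap hπc hπs
  -- parameters
  have hα : ∀ t s : I, (t : ℝ) * min (1 : ℝ) (2 * (s : ℝ)) ∈ I := fun t s => by
    have h1 := t.2.1
    have h2 := t.2.2
    have h3 := s.2.1
    have h4 : 0 ≤ min (1 : ℝ) (2 * s) := le_min zero_le_one (by linarith)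
    exact ⟨mul_nonneg h1 h4, mul_le_one₀ h2 h4 (min_le_left _ _)⟩
  have hβ : ∀ t s : I, (t : ℝ) * min (1 : ℝ) (2 - 2 * (s : ℝ)) ∈ I := fun t s => by
    have h1 := t.2.1
    have h2 := t.2.2
    have h3 := s.2.2
    have h4 : 0 ≤ min (1 : ℝ) (2 - 2 * s) := le_min zero_le_one (by linarith)
    exact ⟨mul_nonneg h1 h4, mul_le_one₀ h2 h4 (min_le_left _ _)⟩
  let α : I × I → I := fun z => ⟨_, hα z.1 z.2⟩
  let β : I × I → I := fun z => ⟨_, hβ z.1 z.2⟩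
  have hαc : Continuous α := by
    refine Continuous.subtype_mk ?_ _
    fun_prop
  have hβc : Continuous β := by
    refine Continuous.subtype_mk ?_ _
    fun_prop
  let g : C((K r S × I) ⊕ (K r L × I × I), K r (insert m S)) :=
    ⟨Sum.elim (fun z => ⟨z.1.1, hST z.1.2⟩)
      (fun z => ⟨_, hsegm (H (α z.2, z.1)) (β z.2)⟩), by
      refine Continuous.sumElim ?_ ?_
      · fun_prop
      · refine Continuous.subtype_mk ?_ _
        exact (continuous_seg m).comp (by fun_prop : Continuous fun z : K r L × I × I =>
          ((β z.2 : ℝ), (H (α z.2, z.1) : M → ℝ)))⟩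
  have hH0 : ∀ x, H (0, x) = x := fun x => by simp
  have hH1 : ∀ x, H (1, x) = c := fun x => by simp
  have hα0 : ∀ s, α (0, s) = 0 := fun s => Subtype.ext (by simp [α])
  have hβ0 : ∀ s, β (0, s) = 0 := fun s => Subtype.ext (by simp [β])
  have hseg0 : ∀ x : M → ℝ, seg m 0 x = x := fun x => by funext p; simp [seg]
  have hseg1 : ∀ x x' : M → ℝ, seg m 1 x = seg m 1 x' := fun x x' => by funext p; simp [seg]
  have hmix : ∀ (y : K r S) (s : I) (x : K r L) (t s' : I),
      π (Sum.inl (y, s)) = π (Sum.inr (x, t, s')) →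
      g (Sum.inl (y, s)) = g (Sum.inr (x, t, s')) := by
    intro y s x t s' h
    have h1 : y.1 = seg m t x.1 := congrArg (fun z => z.1.1) h
    have ht : t = 0 := by
      apply Subtype.ext
      have := congrFun h1 m
      rw [hsm _ (hLS x.2), hz _ y.2] at this
      exact this.symm
    subst ht
    apply Subtype.ext
    change y.1 = seg m (β (0, s')) (H (α (0, s'), x)).1
    rw [hα0, hβ0, hH0, h1]
  have hwd : ∀ a b, π a = π b → g a = g b := by
    rintro (⟨y, s⟩ | ⟨x, t, s⟩) (⟨y', s'⟩ | ⟨x', t', s'⟩) h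
    · apply Subtype.ext
      exact congrArg (fun z => z.1.1) h
    · exact hmix _ _ _ _ _ h
    · exact (hmix _ _ _ _ _ h.symm).symm
    · have h1 : seg m t x.1 = seg m t' x'.1 := congrArg (fun z => z.1.1) h
      have hs : s = s' := congrArg (fun z => z.2) h
      subst hs
      have ht : t = t' := by
        apply Subtype.ext
        have := congrFun h1 m
        rwa [hsm _ (hLS x.2), hsm _ (hLS x'.2)] at this
      subst ht
      apply Subtype.ext
      change seg m (β (t, s)) (H (α (t, s), x)).1 = seg m (β (t, s)) (H (α (t, s), x')).1
      by_cases h1t : (t : ℝ) = 1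
      · rcases le_total (s : ℝ) (1 / 2) with h2 | h2
        · have : β (t, s) = 1 := by
            apply Subtype.ext
            change (t : ℝ) * min (1 : ℝ) (2 - 2 * (s : ℝ)) = 1
            rw [h1t, min_eq_left (by linarith), one_mul]
          rw [this]
          exact hseg1 _ _
        · have : α (t, s) = 1 := by
            apply Subtype.ext
            change (t : ℝ) * min (1 : ℝ) (2 * (s : ℝ)) = 1
            rw [h1t, min_eq_left (by linarith), one_mul]
          rw [this, hH1, hH1]
      · have : x = x' := by
          apply Subtype.ext
          funext p
          have h3 := congrFun h1 p
          simp only [seg, add_left_inj] at h3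
          exact mul_left_cancel₀ (sub_ne_zero.2 (Ne.symm h1t)) h3
        rw [this]
  let G : C(K r (insert m S) × I, K r (insert m S)) := hπq.lift g (fun a b => hwd a b)
  have hG : ∀ a, G (π a) = g a := fun a =>
    congrArg (fun k => k a) (hπq.lift_comp g (fun a b => hwd a b))
  refine equiv_of_retract hST G ?_ ?_ ?_
  · intro y
    obtain ⟨a, ha⟩ := hπs (y, 0)
    rw [← ha, hG]
    rcases a with ⟨y', s⟩ | ⟨x, t, s⟩
    · exact congrArg (fun z => z.1) ha
    · have hs : s = 0 := congrArg (fun z => z.2) ha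
      have hy : seg m t x.1 = y.1 := congrArg (fun z => z.1.1) ha
      subst hs
      apply Subtype.ext
      change seg m (β (t, 0)) (H (α (t, 0), x)).1 = y.1
      have h1 : α (t, 0) = 0 := Subtype.ext (by simp [α])
      have h2 : β (t, 0) = t := Subtype.ext (by simp [β])
      rw [h1, h2, hH0, hy]
  · intro y
    obtain ⟨a, ha⟩ := hπs (y, 1)
    rw [← ha, hG]
    rcases a with ⟨y', s⟩ | ⟨x, t, s⟩
    · exact y'.2
    · have hs : s = 1 := congrArg (fun z => z.2) ha
      subst hs
      change seg m (β (t, 1)) (H (α (t, 1), x)).1 ∈ K r S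
      have h2 : β (t, 1) = 0 := Subtype.ext (by simp [β])
      rw [h2]
      change seg m 0 _ ∈ _
      rw [hseg0]
      exact hLS (H _).2
  · intro y hy s
    have : (y, s) = π (Sum.inl (⟨y.1, hy⟩, s)) := rfl
    rw [this, hG]
    rfl

end

/-- comparability -/
def cmp (M : Type) [PartialOrder M] (p q : M) : Prop := p ≤ q ∨ q ≤ p

lemma main_up {M : Type} [Fintype M] [PartialOrder M] (n : ℕ) : ∀ (S U : Finset M),
    S.card = n → U ⊆ S → (∀ u ∈ U, ∀ s ∈ S, u ≤ s → s ∈ U) →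
    (∀ q ∈ S, q ∉ U → ContractibleSpace (K (cmp M) {x | x ∈ U ∧ q < x})) →
    Nonempty (ContinuousMap.HomotopyEquiv (K (cmp M) (U : Set M)) (K (cmp M) (S : Set M))) := by
  induction n using Nat.strong_induction_on with
  | _ n ih =>
  intro S U hn hUS hup hc
  by_cases hSU : S = U
  · subst hSU
    exact ⟨ContinuousMap.HomotopyEquiv.refl _⟩
  have hne : (S \ U).Nonempty := by
    rw [Finset.sdiff_nonempty]
    exact fun h => hSU (h.antisymm hUS)
  obtain ⟨m, hm⟩ := (S \ U).exists_minimal hne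
  have hmS : m ∈ S := (Finset.mem_sdiff.1 hm.1).1
  have hmU : m ∉ U := (Finset.mem_sdiff.1 hm.1).2
  have hlow : ∀ x ∈ S, x ≤ m → x = m := by
    intro x hx hxm
    have hxU : x ∉ U := fun h => hmU (hup x h m hmS hxm)
    exact le_antisymm hxm (hm.2 (Finset.mem_sdiff.2 ⟨hx, hxU⟩) hxm)
  obtain ⟨e1⟩ := ih (S.erase m).card (by rw [← hn]; exact Finset.card_erase_lt_of_mem hmS)
    (S.erase m) U rfl
    (fun x hx => Finset.mem_erase.2 ⟨fun h => hmU (h ▸ hx), hUS hx⟩)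
    (fun u hu s hs h => hup u hu s (Finset.mem_of_mem_erase hs) h)
    (fun q hq hqU => hc q (Finset.mem_of_mem_erase hq) hqU)
  obtain ⟨e2⟩ := ih (S.filter (m < ·)).card (by
      rw [← hn]
      refine Finset.card_lt_card (Finset.filter_ssubset.2 ⟨m, hmS, lt_irrefl m⟩))
    (S.filter (m < ·)) (U.filter (m < ·)) rfl
    (Finset.filter_subset_filter _ hUS)
    (by
      intro u hu s hs h
      simp only [Finset.mem_filter] at *
      exact ⟨hup u hu.1 s hs.1 h, hs.2⟩)
    (by
      intro q hq hqU
      simp only [Finset.mem_filter, not_and] at hq hqU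
      have hqU' : q ∉ U := fun h => hqU h hq.2
      have := hc q hq.1 hqU'
      have heq : {x | x ∈ U.filter (m < ·) ∧ q < x} = {x | x ∈ U ∧ q < x} := by
        ext x
        simp only [Finset.mem_filter, Set.mem_setOf_eq]
        exact ⟨fun h => ⟨h.1.1, h.2⟩, fun h => ⟨⟨h.1, hq.2.trans h.2⟩, h.2⟩⟩
      rw [heq]
      exact this)
  have hcU := hc m hmS hmU
  have h1 : ((U.filter (m < ·) : Finset M) : Set M) = {x | x ∈ U ∧ m < x} := by
    ext x; simp
  have h2 : ((S.filter (m < ·) : Finset M) : Set M)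
      = {x | x ∈ ((S.erase m : Finset M) : Set M) ∧ cmp M x m} := by
    ext x
    simp only [Finset.coe_filter, Set.mem_setOf_eq, Finset.coe_erase, Set.mem_diff,
      Finset.mem_coe, Set.mem_singleton_iff, cmp]
    constructor
    · rintro ⟨hx, h⟩
      exact ⟨⟨hx, h.ne'⟩, Or.inr h.le⟩
    · rintro ⟨⟨hx, h⟩, h' | h'⟩
      · exact absurd (hlow x hx h') h
      · exact ⟨hx, lt_of_le_of_ne h' (Ne.symm h)⟩
  rw [h1, h2] at e2
  have hcL := e2.symm.contractibleSpace
  obtain ⟨e3⟩ := add_point (r := cmp M) (S := ((S.erase m : Finset M) : Set M)) (m := m)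
    (fun p q h => h.symm) (fun p => Or.inl le_rfl) (by simp) hcL
  have h3 : insert m ((S.erase m : Finset M) : Set M) = S := by
    rw [← Finset.coe_insert, Finset.insert_erase hmS]
  rw [h3] at e3
  exact ⟨e1.trans e3⟩

lemma K_dual {M : Type} [Fintype M] [PartialOrder M] (S : Set M) :
    K (M := Mᵒᵈ) (cmp Mᵒᵈ) S = K (cmp M) S := by
  have : (cmp Mᵒᵈ : M → M → Prop) = cmp M := by
    funext p q
    exact propext or_comm
  change K (M := M) (cmp Mᵒᵈ : M → M → Prop) S = _
  rw [this]

lemma main_down {M : Type} [Fintype M] [PartialOrder M] (S U : Finset M)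
    (hUS : U ⊆ S) (hdown : ∀ u ∈ U, ∀ s ∈ S, s ≤ u → s ∈ U)
    (hc : ∀ q ∈ S, q ∉ U → ContractibleSpace (K (cmp M) {x | x ∈ U ∧ x < q})) :
    Nonempty (ContinuousMap.HomotopyEquiv (K (cmp M) (U : Set M)) (K (cmp M) (S : Set M))) := by
  have := main_up (M := Mᵒᵈ) S.card S U rfl hUS hdown (fun q hq hqU => by
    have := hc q hq hqU
    rw [← K_dual] at this
    exact this)
  rw [← K_dual, ← K_dual]
  exact this

/-- Realization of a subposet. -/
lemma real_homeo {A M : Type} [Fintype A] [PartialOrder A] [Fintype M] [PartialOrder M]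
    (e : A ↪o M) (S : Set M) (hS : Set.range e = S) :
    Nonempty (GeomReal A ≃ₜ K (cmp M) S) := by
  subst hS
  have hinj := e.injective
  have hext : ∀ (a : A → ℝ) x, Function.extend e a 0 x ≠ 0 → ∃ p, e p = x ∧ a p ≠ 0 := by
    intro a x hx
    by_cases h : ∃ p, e p = x
    · obtain ⟨p, rfl⟩ := h
      rw [hinj.extend_apply] at hx
      exact ⟨p, rfl, hx⟩
    · rw [Function.extend_apply' _ _ _ h] at hx
      exact absurd rfl hx
  have hsum : ∀ b : M → ℝ, (∀ x, b x ≠ 0 → x ∈ Set.range e) → ∑ p, b (e p) = ∑ x, b x := by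
    intro b hb
    have h0 := Finset.sum_map Finset.univ e.toEmbedding b
    refine Eq.trans h0.symm ?_
    refine Finset.sum_subset (Finset.subset_univ _) fun x _ hx => ?_
    by_contra h
    obtain ⟨p, rfl⟩ := hb x h
    exact hx (by simp)
  refine ⟨{ toFun := fun a => ⟨Function.extend e a.1 0, ?_, ?_, ?_, ?_⟩
            invFun := fun b => ⟨fun p => b.1 (e p), ?_, ?_, ?_⟩
            left_inv := ?_
            right_inv := ?_
            continuous_toFun := ?_
            continuous_invFun := ?_ }⟩
  · intro x
    by_cases h : ∃ p, e p = x
    · obtain ⟨p, rfl⟩ := h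
      rw [hinj.extend_apply]
      exact a.2.1 p
    · rw [Function.extend_apply' _ _ _ h]
      exact le_rfl
  · rw [← hsum _ fun x hx => ?_]
    · simp only [hinj.extend_apply]
      exact a.2.2.1
    · obtain ⟨p, hp, _⟩ := hext _ _ hx
      exact ⟨p, hp⟩
  · intro x y hx hy
    obtain ⟨p, rfl, hp⟩ := hext _ _ hx
    obtain ⟨q, rfl, hq⟩ := hext _ _ hy
    have := a.2.2.2.total (x := p) (y := q) hp hq
    simpa [cmp] using this
  · intro x hx
    obtain ⟨p, hp, _⟩ := hext _ _ hx
    exact ⟨p, hp⟩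
  · intro p; exact b.2.1 _
  · rw [hsum _ b.2.2.2.2]; exact b.2.2.1
  · intro p hp q hq _
    have := b.2.2.2.1 (e p) (e q) hp hq
    simpa [cmp] using this
  · intro a
    apply Subtype.ext
    funext p
    exact hinj.extend_apply _ _ _
  · intro b
    apply Subtype.ext
    funext x
    change Function.extend e (fun p => b.1 (e p)) 0 x = b.1 x
    by_cases h : ∃ p, e p = x
    · obtain ⟨p, rfl⟩ := h
      rw [hinj.extend_apply]
    · rw [Function.extend_apply' _ _ _ h]
      by_contra h'
      exact h (b.2.2.2.2 x (Ne.symm h'))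
  · refine Continuous.subtype_mk (continuous_pi fun x => ?_) _
    by_cases h : ∃ p, e p = x
    · obtain ⟨p, rfl⟩ := h
      simp only [hinj.extend_apply]
      exact (continuous_apply p).comp continuous_subtype_val
    · simp only [Function.extend_apply' _ _ _ h]
      exact continuous_const
  · refine Continuous.subtype_mk (continuous_pi fun x => ?_) _
    exact (continuous_apply (e x)).comp continuous_subtype_val

/-- The mapping cylinder poset of `f`. -/
def Cyl {P Q : Type} (_f : P → Q) : Type := P ⊕ Q

instance {P Q : Type} [Fintype P] [Fintype Q] (f : P → Q) : Fintype (Cyl f) :=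
  inferInstanceAs (Fintype (P ⊕ Q))

/-- Order relation of the mapping cylinder. -/
def CylLe {P Q : Type} [PartialOrder P] [PartialOrder Q] (f : P → Q) : P ⊕ Q → P ⊕ Q → Prop
  | .inl p, .inl p' => p ≤ p'
  | .inr q, .inr q' => q ≤ q'
  | .inr q, .inl p => q ≤ f p
  | .inl _, .inr _ => False

/-- Mapping cylinder as a poset. -/
@[reducible]
def cylOrder {P Q : Type} [PartialOrder P] [PartialOrder Q] (f : P → Q) (hf : Monotone f) :
    PartialOrder (Cyl f) where
  le := CylLe f
  le_refl := by
    rintro (p | q)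
    · exact le_refl p
    · exact le_refl q
  le_trans := by
    rintro (a | a) (b | b) (c | c) h1 h2
    · exact le_trans (α := P) h1 h2
    · exact h2
    · exact h1.elim
    · exact h1.elim
    · exact le_trans (α := Q) h1 (hf h2)
    · exact h2.elim
    · exact le_trans (α := Q) h1 h2
    · exact le_trans (α := Q) h1 h2
  le_antisymm := by
    rintro (a | a) (b | b) h1 h2
    · exact congrArg Sum.inl (le_antisymm (α := P) h1 h2)
    · exact h1.elim
    · exact h2.elim
    · exact congrArg Sum.inr (le_antisymm (α := Q) h1 h2)

end QFL

/-- Quillen's fiber lemma (upper fibers): if all preimages of principal up-sets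
are contractible, the realizations are homotopy equivalent. -/
theorem quillen_fiber_lemma_ge {P Q : Type} [Fintype P] [PartialOrder P]
    [Fintype Q] [PartialOrder Q] (f : P → Q) (hf : Monotone f)
    (h : ∀ q : Q, ContractibleSpace (GeomReal {p : P // q ≤ f p})) :
    Nonempty (ContinuousMap.HomotopyEquiv (GeomReal P) (GeomReal Q)) := by
  letI := QFL.cylOrder f hf
  let iP : P ↪o QFL.Cyl f := ⟨⟨Sum.inl, Sum.inl_injective⟩, Iff.rfl⟩
  let iQ : Q ↪o QFL.Cyl f := ⟨⟨Sum.inr, Sum.inr_injective⟩, Iff.rfl⟩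
  have hne : ∀ p q, iP p ≠ iQ q := fun p q h => Sum.inl_ne_inr h
  have hcov : ∀ x : QFL.Cyl f, (∃ p, iP p = x) ∨ ∃ q, iQ q = x := by
    rintro (p | q)
    · exact Or.inl ⟨p, rfl⟩
    · exact Or.inr ⟨q, rfl⟩
  have hQP : ∀ q p, iQ q ≤ iP p ↔ q ≤ f p := fun q p => Iff.rfl
  have hPQ : ∀ q p, ¬ iP p ≤ iQ q := fun q p h => h
  let UP : Finset (QFL.Cyl f) := Finset.univ.map iP.toEmbedding
  let UQ : Finset (QFL.Cyl f) := Finset.univ.map iQ.toEmbedding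
  have mUP : ∀ x, x ∈ UP ↔ ∃ p, iP p = x := fun x => by simp [UP]
  have mUQ : ∀ x, x ∈ UQ ↔ ∃ q, iQ q = x := fun x => by simp [UQ]
  obtain ⟨eP⟩ := QFL.real_homeo iP (UP : Set (QFL.Cyl f)) (by ext x; simp [mUP])
  obtain ⟨eQ⟩ := QFL.real_homeo iQ (UQ : Set (QFL.Cyl f)) (by ext x; simp [mUQ])
  obtain ⟨E1⟩ := QFL.main_up _ (Finset.univ : Finset (QFL.Cyl f)) UP rfl
    (Finset.subset_univ _)
    (by
      intro u hu s _ hus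
      obtain ⟨p, rfl⟩ := (mUP u).1 hu
      rcases hcov s with hs | ⟨q, rfl⟩
      · exact (mUP s).2 hs
      · exact (hPQ _ _ hus).elim)
    (by
      intro x _ hx
      rcases hcov x with hs | ⟨q, rfl⟩
      · exact absurd ((mUP x).2 hs) hx
      let e : {p : P // q ≤ f p} ↪o QFL.Cyl f := (OrderEmbedding.subtype _).trans iP
      obtain ⟨k⟩ := QFL.real_homeo e {x | x ∈ UP ∧ iQ q < x} (by
        ext x
        simp only [Set.mem_range, Set.mem_setOf_eq, mUP]
        constructor
        · rintro ⟨p, rfl⟩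
          exact ⟨⟨p.1, rfl⟩, lt_of_le_of_ne ((hQP q p.1).2 p.2) (hne _ _).symm⟩
        · rintro ⟨⟨p, rfl⟩, hlt⟩
          exact ⟨⟨p, (hQP q p).1 hlt.le⟩, rfl⟩)
      have := h q
      exact k.symm.contractibleSpace)
  obtain ⟨E2⟩ := QFL.main_down (Finset.univ : Finset (QFL.Cyl f)) UQ
    (Finset.subset_univ _)
    (by
      intro u hu s _ hus
      obtain ⟨q, rfl⟩ := (mUQ u).1 hu
      rcases hcov s with ⟨p, rfl⟩ | hs
      · exact (hPQ _ _ hus).elim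
      · exact (mUQ s).2 hs)
    (by
      intro x _ hx
      rcases hcov x with ⟨p, rfl⟩ | hs
      swap
      · exact absurd ((mUQ x).2 hs) hx
      refine QFL.contractible_of_cone (m := iQ (f p)) (fun p q h => h.symm)
        (fun p => Or.inl le_rfl) ?_ ?_
      · exact ⟨(mUQ _).2 ⟨_, rfl⟩, lt_of_le_of_ne ((hQP _ _).2 le_rfl) (hne _ _).symm⟩
      · rintro x ⟨hx, hlt⟩
        obtain ⟨q, rfl⟩ := (mUQ x).1 hx
        exact Or.inl (iQ.le_iff_le.2 ((hQP _ _).1 hlt.le)))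
  exact ⟨eP.toHomotopyEquiv.trans (E1.trans (E2.symm.trans eQ.symm.toHomotopyEquiv))⟩
end

section
/- Let P and Q be finite partially ordered sets and f : P → Q an order-preserving map. If for every q ∈ Q the geometric realization of the subposet f⁻¹(Q_{≤q}) = {p ∈ P : f(p) ≤ q} (with the order induced from P) is contractible, then |P| and |Q| are homotopy equivalent. -/
open Classical

namespace QFL

variable {M : Type} [Fintype M]

/-- Realization of the flag complex of `r` restricted to `S`, inside `M → ℝ`. -/
def R (r : M → M → Prop) (S : Set M) : Set (M → ℝ) :=
  {y | (∀ p, 0 ≤ y p) ∧ ∑ p, y p = 1 ∧ (∀ p, p ∉ S → y p = 0) ∧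
    ∀ p q, ¬ r p q → y p * y q = 0}

/-- Same as `R` but with total mass at most one. -/
def B (r : M → M → Prop) (S : Set M) : Set (M → ℝ) :=
  {y | (∀ p, 0 ≤ y p) ∧ ∑ p, y p ≤ 1 ∧ (∀ p, p ∉ S → y p = 0) ∧
    ∀ p q, ¬ r p q → y p * y q = 0}

lemma B_compact (r : M → M → Prop) (S : Set M) : IsCompact (B r S) := by
  refine IsCompact.of_isClosed_subset (isCompact_Icc (a := (0 : M → ℝ)) (b := 1)) ?_ ?_
  · simp only [B, Set.ofPred_and, Set.ofPred_forall]
    refine IsClosed.inter ?_ (IsClosed.inter ?_ (IsClosed.inter ?_ ?_))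
    · exact isClosed_iInter fun p => isClosed_le continuous_const (by fun_prop)
    · exact isClosed_le (by fun_prop) continuous_const
    · exact isClosed_iInter fun p => isClosed_iInter fun _ =>
        isClosed_eq (by fun_prop) continuous_const
    · exact isClosed_iInter fun p => isClosed_iInter fun q => isClosed_iInter fun _ =>
        isClosed_eq (by fun_prop) continuous_const
  · rintro y ⟨h0, h1, -⟩
    refine ⟨h0, fun p => ?_⟩
    exact (Finset.single_le_sum (fun i _ => h0 i) (Finset.mem_univ p)).trans h1

lemma R_compact (r : M → M → Prop) (S : Set M) : IsCompact (R r S) := by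
  have : R r S = B r S ∩ {y | ∑ p, y p = 1} := by
    ext y
    constructor
    · rintro ⟨a, b, c, d⟩
      exact ⟨⟨a, b.le, c, d⟩, b⟩
    · rintro ⟨⟨a, -, c, d⟩, b⟩
      exact ⟨a, b, c, d⟩
  rw [this]
  exact (B_compact r S).inter_right (isClosed_eq (by fun_prop) continuous_const)

lemma R_mono {r : M → M → Prop} {S T : Set M} (h : S ⊆ T) : R r S ⊆ R r T :=
  fun _ ⟨a, b, c, d⟩ => ⟨a, b, fun p hp => c p fun hh => hp (h hh), d⟩

/-- Join map. -/
noncomputable def J (x : M) (h : M → ℝ) (m : ℝ) (b : M → ℝ) : M → ℝ :=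
  fun p => (1 - ∑ q, b q) * (m * h p + (1 - m) * (if p = x then 1 else 0)) + b p

lemma J_cont {Z : Type} [TopologicalSpace Z] (x : M) {h b : Z → M → ℝ} {m : Z → ℝ}
    (hh : Continuous h) (hm : Continuous m) (hb : Continuous b) :
    Continuous fun z => J x (h z) (m z) (b z) := by
  have h1 : ∀ p, Continuous fun z => h z p := fun p => (continuous_apply p).comp hh
  have h2 : ∀ p, Continuous fun z => b z p := fun p => (continuous_apply p).comp hb
  refine continuous_pi fun p => ?_
  have h3 := h1 p
  have h4 := h2 p
  have h5 : Continuous fun z => ∑ q, b z q := continuous_finset_sum _ fun q _ => h2 q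
  unfold J
  fun_prop

/-- Link decomposition data. -/
structure Lk (r : M → M → Prop) (S L U : Set M) (x : M) : Prop where
  hL : L ⊆ S
  hU : U ⊆ S
  hx : x ∉ S
  hd : ∀ l ∈ L, l ∉ U
  hxx : r x x
  hxL : ∀ l ∈ L, r l x ∧ r x l
  hxU : ∀ l ∈ U, r l x ∧ r x l
  hLU : ∀ l ∈ L, ∀ u ∈ U, r l u ∧ r u l
  hS : ∀ z ∈ S, r z x → z ∈ L ∨ z ∈ U

section
variable {r : M → M → Prop} {S L U : Set M} {x : M}

lemma J_mem (k : Lk r S L U x) {h b : M → ℝ} {m : ℝ} (hh : h ∈ R r L) (hb : b ∈ B r U)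
    (m0 : 0 ≤ m) (m1 : m ≤ 1) : J x h m b ∈ R r (insert x S) := by
  obtain ⟨a1, a2, a3, a4⟩ := hh
  obtain ⟨b1, b2, b3, b4⟩ := hb
  refine ⟨fun p => ?_, ?_, fun p hp => ?_, fun p q hpq => ?_⟩
  · have := a1 p
    have := b1 p
    have h1 : 0 ≤ 1 - ∑ q, b q := by linarith
    have h2 : 0 ≤ 1 - m := by linarith
    unfold J
    positivity
  · simp only [J, Finset.sum_add_distrib, ← Finset.mul_sum, a2]
    simp
  · simp only [Set.mem_insert_iff, not_or] at hp
    simp only [J, if_neg hp.1, a3 p fun hh => hp.2 (k.hL hh), b3 p fun hh => hp.2 (k.hU hh)]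
    ring
  · set d : M → ℝ := fun p => if p = x then 1 else 0 with hd
    have d0 : ∀ p, p ≠ x → d p = 0 := fun p hp => by simp [hd, hp]
    have e1 := a4 p q hpq
    have e2 := b4 p q hpq
    have e3 : h p * d q = 0 := by
      by_cases hq : q = x
      · by_cases hp : p ∈ L
        · subst hq; exact absurd (k.hxL p hp).1 hpq
        · rw [a3 p hp, zero_mul]
      · rw [d0 q hq, mul_zero]
    have e4 : d p * h q = 0 := by
      by_cases hq : p = x
      · by_cases hp : q ∈ L
        · subst hq; exact absurd (k.hxL q hp).2 hpq
        · rw [a3 q hp, mul_zero]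
      · rw [d0 p hq, zero_mul]
    have e5 : b p * d q = 0 := by
      by_cases hq : q = x
      · by_cases hp : p ∈ U
        · subst hq; exact absurd (k.hxU p hp).1 hpq
        · rw [b3 p hp, zero_mul]
      · rw [d0 q hq, mul_zero]
    have e6 : d p * b q = 0 := by
      by_cases hq : p = x
      · by_cases hp : q ∈ U
        · subst hq; exact absurd (k.hxU q hp).2 hpq
        · rw [b3 q hp, mul_zero]
      · rw [d0 p hq, zero_mul]
    have e7 : d p * d q = 0 := by
      by_cases hq : p = x
      · by_cases hp : q = x
        · subst hq; subst hp; exact absurd k.hxx hpq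
        · rw [d0 q hp, mul_zero]
      · rw [d0 p hq, zero_mul]
    have e8 : h p * b q = 0 := by
      by_cases hq : p ∈ L
      · by_cases hp : q ∈ U
        · exact absurd (k.hLU p hq q hp).1 hpq
        · rw [b3 q hp, mul_zero]
      · rw [a3 p hq, zero_mul]
    have e9 : b p * h q = 0 := by
      by_cases hq : q ∈ L
      · by_cases hp : p ∈ U
        · exact absurd (k.hLU q hq p hp).2 hpq
        · rw [b3 p hp, zero_mul]
      · rw [a3 q hq, mul_zero]
    change ((1 - ∑ q, b q) * (m * h p + (1 - m) * d p) + b p) *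
      ((1 - ∑ q, b q) * (m * h q + (1 - m) * d q) + b q) = 0
    generalize 1 - ∑ q, b q = w
    linear_combination w^2 * m^2 * e1 + e2 + w^2*m*(1-m)*e3 + w^2*m*(1-m)*e4 + w*(1-m)*e5 +
      w*(1-m)*e6 + w^2*(1-m)^2*e7 + w*m*e8 + w*m*e9

lemma J_x (k : Lk r S L U x) {h b : M → ℝ} {m : ℝ} (hh : h ∈ R r L) (hb : b ∈ B r U) :
    J x h m b x = (1 - ∑ q, b q) * (1 - m) := by
  simp [J, hh.2.2.1 x fun hh => k.hx (k.hL hh), hb.2.2.1 x fun hh => k.hx (k.hU hh)]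

lemma mem_of_x {y : M → ℝ} (hy : y ∈ R r (insert x S)) (h0 : y x = 0) : y ∈ R r S := by
  obtain ⟨a1, a2, a3, a4⟩ := hy
  refine ⟨a1, a2, fun p hp => ?_, a4⟩
  by_cases h : p = x
  · rw [h, h0]
  · exact a3 p (by simp [h, hp])

lemma J_inj (k : Lk r S L U x) {h b h' b' : M → ℝ} {m m' : ℝ} (hh : h ∈ R r L) (hb : b ∈ B r U)
    (hh' : h' ∈ R r L) (hb' : b' ∈ B r U) (e : J x h m b = J x h' m' b') :
    b = b' ∧ (∑ q, b q = 1 ∨ (m = m' ∧ (m = 0 ∨ h = h'))) := by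
  have hbb : b = b' := by
    funext p
    by_cases hp : p ∈ U
    · have hpL : p ∉ L := fun hl => k.hd p hl hp
      have hpx : p ≠ x := fun hh => k.hx (hh ▸ k.hU hp)
      have := congrFun e p
      simpa [J, hh.2.2.1 p hpL, hh'.2.2.1 p hpL, hpx] using this
    · rw [hb.2.2.1 p hp, hb'.2.2.1 p hp]
  subst hbb
  refine ⟨rfl, ?_⟩
  by_cases h1 : ∑ q, b q = 1
  · exact Or.inl h1
  right
  have hw : 1 - ∑ q, b q ≠ 0 := fun hh => h1 (by linarith)
  have hm : m = m' := by
    have := congrFun e x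
    rw [J_x k hh hb, J_x k hh' hb] at this
    have := mul_left_cancel₀ hw this
    linarith
  subst hm
  refine ⟨rfl, ?_⟩
  by_cases hm : m = 0
  · exact Or.inl hm
  right
  funext p
  have := congrFun e p
  simp only [J] at this
  have := mul_left_cancel₀ hw (add_right_cancel this)
  exact mul_left_cancel₀ hm (add_right_cancel this)

lemma J_surj (k : Lk r S L U x) (c : M → ℝ) (hc : c ∈ R r L) {y : M → ℝ}
    (hy : y ∈ R r (insert x S)) (h0 : y x ≠ 0) :
    ∃ a ∈ R r L, ∃ b ∈ B r U, ∃ m : ℝ, 0 ≤ m ∧ m ≤ 1 ∧ J x a m b = y := by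
  obtain ⟨y1, y2, y3, y4⟩ := hy
  set a0 : M → ℝ := fun p => if p ∈ L then y p else 0 with ha0
  set b : M → ℝ := fun p => if p ∈ U then y p else 0 with hb
  have dec : ∀ p, y p = a0 p + y x * (if p = x then 1 else 0) + b p := by
    intro p
    by_cases hpx : p = x
    · subst hpx
      have h1 : p ∉ L := fun h => k.hx (k.hL h)
      have h2 : p ∉ U := fun h => k.hx (k.hU h)
      simp [ha0, hb, h1, h2]
    by_cases hL : p ∈ L
    · have := k.hd p hL
      simp [ha0, hb, hL, this, hpx]
    by_cases hU : p ∈ U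
    · simp [ha0, hb, hL, hU, hpx]
    simp only [ha0, hb, hL, hU, hpx, if_false]
    by_cases hS : p ∈ S
    · have : ¬ r p x := fun hr => (k.hS p hS hr).elim hL hU
      have := y4 p x this
      simpa [h0] using this
    · simpa using y3 p (by simp [hpx, hS])
  have hsum : ∑ p, a0 p + y x + ∑ p, b p = 1 := by
    rw [← y2, Finset.sum_congr rfl fun p _ => dec p]
    simp [Finset.sum_add_distrib]
  have a0n : ∀ p, 0 ≤ a0 p := fun p => by
    simp only [ha0]; split_ifs; exacts [y1 p, le_rfl]
  have bn : ∀ p, 0 ≤ b p := fun p => by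
    simp only [hb]; split_ifs; exacts [y1 p, le_rfl]
  have hα : 0 ≤ ∑ p, a0 p := Finset.sum_nonneg fun p _ => a0n p
  have ht : 0 < y x := lt_of_le_of_ne (y1 x) (Ne.symm h0)
  have hbB : b ∈ B r U := by
    refine ⟨bn, by linarith, fun p hp => by simp [hb, hp], fun p q hpq => ?_⟩
    simp only [hb]
    split_ifs <;> simp [y4 p q hpq]
  set α := ∑ p, a0 p with hαd
  have key : ∃ a ∈ R r L, ∀ p, α * a p = a0 p := by
    by_cases hα0 : α = 0
    · refine ⟨c, hc, fun p => ?_⟩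
      rw [hα0, zero_mul]
      exact ((Finset.sum_eq_zero_iff_of_nonneg fun p _ => a0n p).1 hα0 p (Finset.mem_univ p)).symm
    · refine ⟨fun p => α⁻¹ * a0 p, ⟨fun p => ?_, ?_, fun p hp => ?_, fun p q hpq => ?_⟩, fun p => ?_⟩
      · have := a0n p
        positivity
      · rw [← Finset.mul_sum, ← hαd, inv_mul_cancel₀ hα0]
      · simp [ha0, hp]
      · simp only [ha0]
        split_ifs <;> simp
        have := y4 p q hpq
        simp only [mul_eq_zero] at this
        tauto
      · rw [mul_inv_cancel_left₀ hα0]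
  obtain ⟨a, ha, haa⟩ := key
  refine ⟨a, ha, b, hbB, α / (α + y x), by positivity, ?_, ?_⟩
  · rw [div_le_one (by positivity)]; linarith
  · funext p
    have hw : 1 - ∑ q, b q = α + y x := by linarith
    have hne : α + y x ≠ 0 := by positivity
    simp only [J]
    rw [hw, dec p, ← haa p]
    field_simp
    ring

/-- first homotopy parameter -/
noncomputable def c1 (s : ℝ) : ℝ := max 0 (2 * s - 1)
/-- second homotopy parameter -/
noncomputable def c2 (s : ℝ) : ℝ := min 1 (2 * s)

open unitInterval

theorem main_step (k : Lk r S L U x) (hc : ContractibleSpace (R r L)) :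
    Nonempty (ContinuousMap.HomotopyEquiv (R r S) (R r (insert x S))) := by
  obtain ⟨c, ⟨H⟩⟩ := id_nullhomotopic (R r L)
  have H0 : ∀ a, H (0, a) = a := fun a => by simp
  have H1 : ∀ a, H (1, a) = c := fun a => by simp
  have : CompactSpace (R r S) := isCompact_iff_compactSpace.1 (R_compact r S)
  have : CompactSpace (R r L) := isCompact_iff_compactSpace.1 (R_compact r L)
  have : CompactSpace (B r U) := isCompact_iff_compactSpace.1 (B_compact r U)
  have hsub : R r S ⊆ R r (insert x S) := R_mono (Set.subset_insert x S)
  -- the quotient map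
  let π : C((I × R r S) ⊕ (I × (R r L × I × B r U)), I × R r (insert x S)) :=
    ⟨Sum.elim (fun z => (z.1, ⟨z.2.1, hsub z.2.2⟩))
      (fun z => (z.1, ⟨J x z.2.1 (1 - z.2.2.1) z.2.2.2,
        J_mem k z.2.1.2 z.2.2.2.2 (by linarith [z.2.2.1.2.2]) (by linarith [z.2.2.1.2.1])⟩)),
      continuous_sumElim.2 ⟨by fun_prop, by
        refine Continuous.prodMk (by fun_prop) (Continuous.subtype_mk ?_ _)
        exact J_cont x (by fun_prop) (by fun_prop) (by fun_prop)⟩⟩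
  have hc1 : ∀ s : I, 0 ≤ c1 s ∧ c1 s ≤ 1 := fun s => by
    have := s.2.1; have := s.2.2
    exact ⟨le_max_left _ _, max_le (by norm_num) (by linarith)⟩
  have hc2 : ∀ s : I, 0 ≤ c2 s ∧ c2 s ≤ 1 := fun s => by
    have := s.2.1; have := s.2.2
    exact ⟨le_min (by norm_num) (by linarith), min_le_left _ _⟩
  have hc12 : ∀ s : I, c1 s = 0 ∨ c2 s = 1 := fun s => by
    rcases le_total (2 * (s:ℝ)) 1 with h | h
    · left; exact max_eq_left (by linarith)
    · right; exact min_eq_left h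
  let u : I → I → I := fun s τ => ⟨τ * c2 s, mul_nonneg τ.2.1 (hc2 s).1,
    mul_le_one₀ τ.2.2 (hc2 s).1 (hc2 s).2⟩
  have hu : Continuous fun z : I × I => u z.1 z.2 := by
    refine Continuous.subtype_mk ?_ _
    unfold c2
    fun_prop
  have hm : ∀ s τ : I, 0 ≤ 1 - (τ:ℝ) * (1 - c1 s) ∧ 1 - (τ:ℝ) * (1 - c1 s) ≤ 1 := fun s τ => by
    have h1 := τ.2.1; have h2 := τ.2.2; have h3 := hc1 s
    constructor <;> nlinarith
  let G : C((I × R r S) ⊕ (I × (R r L × I × B r U)), R r (insert x S)) :=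
    ⟨Sum.elim (fun z => ⟨z.2.1, hsub z.2.2⟩)
      (fun z => ⟨J x (H (u z.1 z.2.2.1, z.2.1)) (1 - z.2.2.1 * (1 - c1 z.1)) z.2.2.2,
        J_mem k (H (u z.1 z.2.2.1, z.2.1)).2 z.2.2.2.2 (hm _ _).1 (hm _ _).2⟩),
      continuous_sumElim.2 ⟨by fun_prop, by
        refine Continuous.subtype_mk ?_ _
        have e1 : Continuous fun z : I × (R r L × I × B r U) =>
            (H (u z.1 z.2.2.1, z.2.1) : M → ℝ) := by
          refine continuous_subtype_val.comp (H.continuous.comp ?_)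
          refine Continuous.prodMk ?_ (by fun_prop)
          exact hu.comp (f := fun z : I × (R r L × I × B r U) => (z.1, z.2.2.1)) (by fun_prop)
        have e2 : Continuous c1 := by unfold c1; fun_prop
        exact J_cont x e1 (by fun_prop) (by fun_prop)⟩⟩
  have πsurj : Function.Surjective π := by
    rintro ⟨s, y, hy⟩
    by_cases h0 : y x = 0
    · exact ⟨Sum.inl (s, ⟨y, mem_of_x hy h0⟩), rfl⟩
    · obtain ⟨a, ha, b, hb, m, m0, m1, e⟩ := J_surj k c c.2 hy h0
      refine ⟨Sum.inr (s, ⟨a, ha⟩, ⟨1 - m, by linarith, by linarith⟩, ⟨b, hb⟩), ?_⟩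
      refine Prod.ext rfl (Subtype.ext ?_)
      change J x a (1 - (1 - m)) b = y
      rw [← e]; congr 1; ring
  have πq : Topology.IsQuotientMap π := π.continuous.isClosedMap.isQuotientMap π.continuous πsurj
  have mixed : ∀ (s s' : I) (y : R r S) (z : R r L × I × B r U),
      π (Sum.inl (s, y)) = π (Sum.inr (s', z)) → G (Sum.inl (s, y)) = G (Sum.inr (s', z)) := by
    rintro s s' ⟨y, hy⟩ ⟨⟨a, ha⟩, τ, ⟨b, hb⟩⟩ e
    have e2 : y = J x a (1 - τ) b := congrArg Subtype.val (congrArg Prod.snd e)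
    have hyx : y x = 0 := hy.2.2.1 x k.hx
    rw [e2, J_x k ha hb] at hyx
    refine Subtype.ext ?_
    change y = J x (H (u s' τ, ⟨a, ha⟩)) (1 - τ * (1 - c1 s')) b
    rw [e2]
    rcases mul_eq_zero.1 hyx with h | h
    · funext p
      simp [J, h]
    · have hτ : τ = 0 := Subtype.ext (by simpa using h)
      subst hτ
      have : u s' 0 = 0 := Subtype.ext (by simp [u])
      rw [this, H0]
      simp
  have fact : Function.FactorsThrough G π := by
    rintro (⟨s, y⟩ | ⟨s, z⟩) (⟨s', y'⟩ | ⟨s', z'⟩) e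
    · exact congrArg Prod.snd e
    · exact mixed _ _ _ _ e
    · exact (mixed _ _ _ _ e.symm).symm
    · have es : s = s' := congrArg Prod.fst e
      subst es
      obtain ⟨⟨a, ha⟩, τ, ⟨b, hb⟩⟩ := z
      obtain ⟨⟨a', ha'⟩, τ', ⟨b', hb'⟩⟩ := z'
      have e2 : J x a (1 - τ) b = J x a' (1 - τ') b' :=
        congrArg Subtype.val (congrArg Prod.snd e)
      refine Subtype.ext ?_
      change J x (H (u s τ, ⟨a, ha⟩)) (1 - τ * (1 - c1 s)) b =
        J x (H (u s τ', ⟨a', ha'⟩)) (1 - τ' * (1 - c1 s)) b'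
      obtain ⟨rfl, h | ⟨h1, h2⟩⟩ := J_inj k ha hb ha' hb' e2
      · funext p
        simp [J, h]
      · have hτ : τ = τ' := Subtype.ext (by linarith)
        subst hτ
        rcases h2 with h2 | rfl
        · have hτ : τ = 1 := Subtype.ext (by
            change (τ : ℝ) = 1
            linarith)
          subst hτ
          rcases hc12 s with h3 | h3
          · funext p
            simp [J, h3]
          · have : u s 1 = 1 := Subtype.ext (by simp [u, h3])
            rw [this, H1, H1]
        · rfl
  let F : C(I × R r (insert x S), R r (insert x S)) := πq.lift G fact
  have hF : ∀ d, F (π d) = G d := fun d => DFunLike.congr_fun (πq.lift_comp G fact) d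
  have F0 : ∀ y, F (0, y) = y := by
    intro y
    obtain ⟨d, hd⟩ := πsurj (0, y)
    rw [← hd, hF]
    rcases d with ⟨s, d⟩ | ⟨s, ⟨a, ha⟩, τ, ⟨b, hb⟩⟩
    · exact congrArg Prod.snd hd
    · have hs : s = 0 := congrArg Prod.fst hd
      subst hs
      rw [← show _ = y from congrArg Prod.snd hd]
      refine Subtype.ext ?_
      change J x (H (u 0 τ, ⟨a, ha⟩)) (1 - τ * (1 - c1 (0 : I))) b = J x a (1 - τ) b
      have : u 0 τ = 0 := Subtype.ext (by simp [u, c2])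
      rw [this, H0]
      simp [c1]
  have F1 : ∀ y, (F (1, y) : M → ℝ) ∈ R r S := by
    intro y
    refine mem_of_x (F (1, y)).2 ?_
    obtain ⟨d, hd⟩ := πsurj (1, y)
    rw [← hd, hF]
    rcases d with ⟨s, d⟩ | ⟨s, ⟨a, ha⟩, τ, ⟨b, hb⟩⟩
    · exact d.2.2.2.1 x k.hx
    · have hs : s = 1 := congrArg Prod.fst hd
      subst hs
      change J x (H (u 1 τ, ⟨a, ha⟩)) (1 - τ * (1 - c1 (1 : I))) b x = 0
      rw [J_x k (H (u 1 τ, ⟨a, ha⟩)).2 hb]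
      have : c1 (1 : I) = 1 := by norm_num [c1]
      rw [this]; ring
  have FS : ∀ (s : I) (y : R r S), F (s, ⟨y.1, hsub y.2⟩) = ⟨y.1, hsub y.2⟩ := fun s y =>
    hF (Sum.inl (s, y))
  refine ⟨⟨⟨fun y => ⟨y.1, hsub y.2⟩, by fun_prop⟩, ⟨fun y => ⟨F (1, y), F1 y⟩, by fun_prop⟩, ?_, ?_⟩⟩
  · have : ∀ (f g : C(R r S, R r S)), f = g → f.Homotopic g := fun f g h => h ▸ .refl _
    apply this
    ext1 y
    refine Subtype.ext ?_
    change (F (1, ⟨y.1, hsub y.2⟩) : M → ℝ) = y.1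
    rw [FS 1 y]
  · refine ContinuousMap.Homotopic.symm ⟨⟨F, fun y => F0 y, fun y => rfl⟩⟩

end

/-- embedding homeomorphism -/
theorem homeo {A : Type} [Fintype A] [PartialOrder A] (r : M → M → Prop) (e : A → M)
    (he : Function.Injective e) (hr : ∀ a b, r (e a) (e b) ↔ (a ≤ b ∨ b ≤ a)) :
    Nonempty (GeomReal A ≃ₜ R r (Set.range e)) := by
  have ext0 : ∀ (y : A → ℝ) p, p ∉ Set.range e → Function.extend e y 0 p = 0 := fun y p hp =>
    Function.extend_apply' _ _ _ hp
  have exte : ∀ (y : A → ℝ) a, Function.extend e y 0 (e a) = y a := fun y a =>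
    he.extend_apply _ _ _
  have hsum : ∀ z : M → ℝ, (∀ p, p ∉ Set.range e → z p = 0) → ∑ a, z (e a) = ∑ p, z p := by
    intro z hz
    exact Fintype.sum_of_injective e he _ _ (fun p hp => hz p hp) fun _ => rfl
  refine ⟨⟨⟨fun y => ⟨Function.extend e y.1 0, ?_⟩, fun z => ⟨fun a => z.1 (e a), ?_⟩, ?_, ?_⟩, ?_, ?_⟩⟩
  · obtain ⟨y, y1, y2, y3⟩ := y
    refine ⟨fun p => ?_, ?_, ext0 y, fun p q hpq => ?_⟩
    · by_cases hp : p ∈ Set.range e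
      · obtain ⟨a, rfl⟩ := hp
        rw [exte]; exact y1 a
      · rw [ext0 y p hp]
    · rw [← hsum _ (ext0 y), ← y2]
      exact Finset.sum_congr rfl fun a _ => exte y a
    · by_cases hp : p ∈ Set.range e
      · by_cases hq : q ∈ Set.range e
        · obtain ⟨a, rfl⟩ := hp
          obtain ⟨b, rfl⟩ := hq
          rw [hr] at hpq
          simp only [exte]
          by_contra hne
          rw [mul_eq_zero, not_or] at hne
          exact hpq (y3.total hne.1 hne.2)
        · rw [ext0 y q hq, mul_zero]
      · rw [ext0 y p hp, zero_mul]
  · obtain ⟨z, z1, z2, z3, z4⟩ := z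
    refine ⟨fun a => z1 _, (hsum z z3).trans z2, fun a ha b hb _ => ?_⟩
    by_contra hh
    have := z4 (e a) (e b) (fun h' => hh ((hr a b).1 h'))
    exact (mul_ne_zero ha hb) this
  · intro y
    exact Subtype.ext (funext fun a => exte _ a)
  · rintro ⟨z, z1, z2, z3, z4⟩
    refine Subtype.ext (funext fun p => ?_)
    by_cases hp : p ∈ Set.range e
    · obtain ⟨a, rfl⟩ := hp
      exact exte _ a
    · change Function.extend e _ 0 p = z p
      rw [z3 p hp]; exact ext0 _ p hp
  · refine Continuous.subtype_mk (continuous_pi fun p => ?_) _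
    by_cases hp : p ∈ Set.range e
    · obtain ⟨a, rfl⟩ := hp
      simp only [exte]
      exact (continuous_apply a).comp continuous_subtype_val
    · simp only [ext0 _ p hp]; fun_prop
  · refine Continuous.subtype_mk (continuous_pi fun p => ?_) _
    exact (continuous_apply (e p)).comp continuous_subtype_val

/-- A cone is contractible. -/
theorem cone_contractible (r : M → M → Prop) (S : Set M) (x : M) (hx : x ∈ S)
    (hr : ∀ z ∈ S, r z x ∧ r x z) : ContractibleSpace (R r S) := by
  set d : M → ℝ := fun p => if p = x then 1 else 0 with hd
  have d0 : ∀ p, p ≠ x → d p = 0 := fun p hp => by simp [hd, hp]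
  have dn : ∀ p, 0 ≤ d p := fun p => by simp only [hd]; split_ifs <;> norm_num
  have e7 : ∀ p q, ¬ r p q → d p * d q = 0 := by
    intro p q hpq
    by_cases hq : p = x
    · by_cases hp : q = x
      · subst hq; subst hp; exact absurd (hr q hx).1 hpq
      · rw [d0 q hp, mul_zero]
    · rw [d0 p hq, zero_mul]
  have dsum : ∑ p, d p = 1 := by simp [hd]
  have dS : ∀ p, p ∉ S → d p = 0 := fun p hp => d0 p fun h => hp (h ▸ hx)
  have dm : d ∈ R r S := ⟨dn, dsum, dS, e7⟩
  refine StarConvex.contractibleSpace (x := d) ?_ ⟨d, dm⟩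
  rintro y ⟨y1, y2, y3, y4⟩ a b ha hb hab
  refine ⟨fun p => ?_, ?_, fun p hp => ?_, fun p q hpq => ?_⟩
  · have := dn p
    have := y1 p
    simp only [Pi.add_apply, Pi.smul_apply, smul_eq_mul]
    positivity
  · simp only [Pi.add_apply, Pi.smul_apply, smul_eq_mul, Finset.sum_add_distrib, ← Finset.mul_sum,
      dsum, y2]
    linarith
  · simp [dS p hp, y3 p hp]
  · have e1 := y4 p q hpq
    have e2 := e7 p q hpq
    have e3 : y p * d q = 0 := by
      by_cases hq : q = x
      · by_cases hp : p ∈ S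
        · subst hq; exact absurd (hr p hp).1 hpq
        · rw [y3 p hp, zero_mul]
      · rw [d0 q hq, mul_zero]
    have e4 : d p * y q = 0 := by
      by_cases hq : p = x
      · by_cases hp : q ∈ S
        · subst hq; exact absurd (hr q hp).2 hpq
        · rw [y3 q hp, mul_zero]
      · rw [d0 p hq, zero_mul]
    simp only [Pi.add_apply, Pi.smul_apply, smul_eq_mul]
    linear_combination b^2 * e1 + a^2 * e2 + a * b * e3 + a * b * e4

section final
variable {P Q : Type} [Fintype P] [PartialOrder P] [Fintype Q] [PartialOrder Q]

/-- Comparability in the mapping cylinder of `f`. -/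
def cyl (f : P → Q) : P ⊕ Q → P ⊕ Q → Prop
  | Sum.inl p, Sum.inl p' => p ≤ p' ∨ p' ≤ p
  | Sum.inl p, Sum.inr q => f p ≤ q
  | Sum.inr q, Sum.inl p => f p ≤ q
  | Sum.inr q, Sum.inr q' => q ≤ q' ∨ q' ≤ q

theorem ind1 (f : P → Q)
    (h : ∀ q : Q, ContractibleSpace (GeomReal {p : P // f p ≤ q})) (n : ℕ) :
    ∀ T : Finset Q, T.card = n → (∀ a ∈ T, ∀ b, a ≤ b → b ∈ T) →
    Nonempty (ContinuousMap.HomotopyEquiv (R (cyl f) (Set.range Sum.inl))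
      (R (cyl f) (Set.range Sum.inl ∪ Sum.inr '' (T : Set Q)))) := by
  induction n with
  | zero =>
    intro T hT _
    rw [Finset.card_eq_zero] at hT
    subst hT
    have hE : (Set.range Sum.inl ∪ Sum.inr '' ((∅ : Finset Q) : Set Q) : Set (P ⊕ Q)) =
        Set.range Sum.inl := by simp
    rw [hE]
    exact ⟨ContinuousMap.HomotopyEquiv.refl _⟩
  | succ n ih =>
    intro T hT hup
    obtain ⟨q, hq⟩ := Finset.exists_minimal (s := T) (Finset.card_pos.1 (by omega))
    obtain ⟨E⟩ := ih (T.erase q) (by rw [Finset.card_erase_of_mem hq.1]; omega) (by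
      intro a ha b hab
      rw [Finset.mem_erase] at ha ⊢
      refine ⟨?_, hup a ha.2 b hab⟩
      rintro rfl
      exact ha.1 (le_antisymm hab (hq.2 ha.2 hab)))
    have k : Lk (cyl f) (Set.range Sum.inl ∪ Sum.inr '' ((T.erase q : Finset Q) : Set Q))
        (Set.range fun p : {p : P // f p ≤ q} => (Sum.inl p.1 : P ⊕ Q))
        (Sum.inr '' {q' | q < q'}) (Sum.inr q) := by
      constructor
      · rintro _ ⟨p, rfl⟩; exact Or.inl ⟨p.1, rfl⟩
      · rintro _ ⟨q', hq', rfl⟩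
        refine Or.inr ⟨q', ?_, rfl⟩
        simp only [Finset.coe_erase, Set.mem_sdiff, Finset.mem_coe, Set.mem_singleton_iff]
        exact ⟨hup q hq.1 q' (le_of_lt hq'), ne_of_gt hq'⟩
      · simp
      · rintro _ ⟨p, rfl⟩; simp
      · exact Or.inl le_rfl
      · rintro _ ⟨p, rfl⟩; exact ⟨p.2, p.2⟩
      · rintro _ ⟨q', hq', rfl⟩
        exact ⟨Or.inr (le_of_lt hq'), Or.inl (le_of_lt hq')⟩
      · rintro _ ⟨p, rfl⟩ _ ⟨q', hq', rfl⟩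
        exact ⟨p.2.trans (le_of_lt hq'), p.2.trans (le_of_lt hq')⟩
      · rintro z (⟨p, rfl⟩ | ⟨q', hq', rfl⟩) hz
        · exact Or.inl ⟨⟨p, hz⟩, rfl⟩
        · simp only [Finset.coe_erase, Set.mem_sdiff, Finset.mem_coe, Set.mem_singleton_iff] at hq'
          have : q ≤ q' := (show q' ≤ q ∨ q ≤ q' from hz).elim (fun hh => hq.2 hq'.1 hh) id
          exact Or.inr ⟨q', lt_of_le_of_ne this (Ne.symm hq'.2), rfl⟩
    obtain ⟨e⟩ := homeo (A := {p : P // f p ≤ q}) (cyl f) (fun p => (Sum.inl p.1 : P ⊕ Q))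
      (fun a b hab => Subtype.ext (Sum.inl_injective hab)) (fun a b => Iff.rfl)
    have := h q
    obtain ⟨E'⟩ := main_step k e.symm.contractibleSpace
    have : insert (Sum.inr q) (Set.range Sum.inl ∪ Sum.inr '' ((T.erase q : Finset Q) : Set Q)) =
        (Set.range Sum.inl ∪ Sum.inr '' (T : Set Q) : Set (P ⊕ Q)) := by
      have hT' : (T : Set Q) = insert q ((T.erase q : Finset Q) : Set Q) := by
        rw [← Finset.coe_insert, Finset.insert_erase hq.1]
      rw [hT', Set.image_insert_eq, Set.union_insert]
    rw [this] at E'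
    exact ⟨E.trans E'⟩

theorem ind2 (f : P → Q) (hf : Monotone f) (n : ℕ) :
    ∀ T : Finset P, T.card = n → (∀ a ∈ T, ∀ b, b ≤ a → b ∈ T) →
    Nonempty (ContinuousMap.HomotopyEquiv (R (cyl f) (Set.range Sum.inr))
      (R (cyl f) (Set.range Sum.inr ∪ Sum.inl '' (T : Set P)))) := by
  induction n with
  | zero =>
    intro T hT _
    rw [Finset.card_eq_zero] at hT
    subst hT
    have hE : (Set.range Sum.inr ∪ Sum.inl '' ((∅ : Finset P) : Set P) : Set (P ⊕ Q)) =
        Set.range Sum.inr := by simp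
    rw [hE]
    exact ⟨ContinuousMap.HomotopyEquiv.refl _⟩
  | succ n ih =>
    intro T hT hup
    obtain ⟨q, hq⟩ := Finset.exists_maximal (s := T) (Finset.card_pos.1 (by omega))
    obtain ⟨E⟩ := ih (T.erase q) (by rw [Finset.card_erase_of_mem hq.1]; omega) (by
      intro a ha b hab
      rw [Finset.mem_erase] at ha ⊢
      refine ⟨?_, hup a ha.2 b hab⟩
      rintro rfl
      exact ha.1 (le_antisymm (hq.2 ha.2 hab) hab))
    have k : Lk (cyl f) (Set.range Sum.inr ∪ Sum.inl '' ((T.erase q : Finset P) : Set P))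
        (Sum.inr '' {z | f q ≤ z}) (Sum.inl '' {q' | q' < q}) (Sum.inl q) := by
      constructor
      · rintro _ ⟨p, _, rfl⟩; exact Or.inl ⟨p, rfl⟩
      · rintro _ ⟨q', hq', rfl⟩
        refine Or.inr ⟨q', ?_, rfl⟩
        simp only [Finset.coe_erase, Set.mem_sdiff, Finset.mem_coe, Set.mem_singleton_iff]
        exact ⟨hup q hq.1 q' (le_of_lt hq'), ne_of_lt hq'⟩
      · simp
      · rintro _ ⟨p, _, rfl⟩; simp
      · exact Or.inl le_rfl
      · rintro _ ⟨p, hp, rfl⟩; exact ⟨hp, hp⟩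
      · rintro _ ⟨q', hq', rfl⟩
        exact ⟨Or.inl (le_of_lt hq'), Or.inr (le_of_lt hq')⟩
      · rintro _ ⟨p, hp, rfl⟩ _ ⟨q', hq', rfl⟩
        exact ⟨(hf (le_of_lt hq')).trans hp, (hf (le_of_lt hq')).trans hp⟩
      · rintro z (⟨p, rfl⟩ | ⟨q', hq', rfl⟩) hz
        · exact Or.inl ⟨p, hz, rfl⟩
        · simp only [Finset.coe_erase, Set.mem_sdiff, Finset.mem_coe, Set.mem_singleton_iff] at hq'
          have : q' ≤ q := (show q' ≤ q ∨ q ≤ q' from hz).elim id (fun hh => hq.2 hq'.1 hh)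
          exact Or.inr ⟨q', lt_of_le_of_ne this hq'.2, rfl⟩
    obtain ⟨E'⟩ := main_step k (cone_contractible _ _ (Sum.inr (f q)) ⟨f q, le_rfl, rfl⟩ (by
      rintro _ ⟨z, hz, rfl⟩
      exact ⟨Or.inr hz, Or.inl hz⟩))
    have : insert (Sum.inl q) (Set.range Sum.inr ∪ Sum.inl '' ((T.erase q : Finset P) : Set P)) =
        (Set.range Sum.inr ∪ Sum.inl '' (T : Set P) : Set (P ⊕ Q)) := by
      have hT' : (T : Set P) = insert q ((T.erase q : Finset P) : Set P) := by
        rw [← Finset.coe_insert, Finset.insert_erase hq.1]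
      rw [hT', Set.image_insert_eq, Set.union_insert]
    rw [this] at E'
    exact ⟨E.trans E'⟩

end final

end QFL

/-- Quillen's fiber lemma (lower fibers): if all preimages of principal down-sets
are contractible, the realizations are homotopy equivalent. -/
theorem quillen_fiber_lemma_le {P Q : Type} [Fintype P] [PartialOrder P]
    [Fintype Q] [PartialOrder Q] (f : P → Q) (hf : Monotone f)
    (h : ∀ q : Q, ContractibleSpace (GeomReal {p : P // f p ≤ q})) :
    Nonempty (ContinuousMap.HomotopyEquiv (GeomReal P) (GeomReal Q)) := by
  obtain ⟨E1⟩ := QFL.ind1 f h _ Finset.univ rfl (fun _ _ _ _ => Finset.mem_univ _)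
  obtain ⟨E2⟩ := QFL.ind2 f hf _ Finset.univ rfl (fun _ _ _ _ => Finset.mem_univ _)
  obtain ⟨e1⟩ := QFL.homeo (QFL.cyl f) (Sum.inl : P → P ⊕ Q) Sum.inl_injective
    (fun a b => Iff.rfl)
  obtain ⟨e2⟩ := QFL.homeo (QFL.cyl f) (Sum.inr : Q → P ⊕ Q) Sum.inr_injective
    (fun a b => Iff.rfl)
  have hs : (Set.range Sum.inl ∪ Sum.inr '' ((Finset.univ : Finset Q) : Set Q) : Set (P ⊕ Q)) =
      Set.range Sum.inr ∪ Sum.inl '' ((Finset.univ : Finset P) : Set P) := by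
    ext z
    rcases z with z | z <;> simp
  rw [hs] at E1
  exact ⟨e1.toHomotopyEquiv.trans (E1.trans (E2.symm.trans e2.symm.toHomotopyEquiv))⟩
end
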